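/- For every tree T with at least 3 vertices, the maximum number of pairwise independent (≤2)-separations of T equals β(T). -/

import Mathlib

open SimpleGraph

/-- `(A, B)` is a `k`-separation of `H`: edge-disjoint subgraphs whose union is `H`,
with `V(A) \ V(B)` and `V(B) \ V(A)` nonempty and `|V(A) ∩ V(B)| = k`. -/
def IsSeparation {V : Type*} (H : SimpleGraph V) (A B : H.Subgraph) (k : ℕ) : Prop :=
  Disjoint A.edgeSet B.edgeSet ∧ A ⊔ B = ⊤ ∧
    (A.verts \ B.verts).Nonempty ∧ (B.verts \ A.verts).Nonempty ∧
    (A.verts ∩ B.verts).ncard = k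

/-- `(A, B)` is a `(≤2)`-separation of `H`. -/
def IsSepLE2 {V : Type*} (H : SimpleGraph V) (A B : H.Subgraph) : Prop :=
  ∃ k ≤ 2, IsSeparation H A B k

/-- The edge set of `A⁻`: the edges of `A` except those joining two vertices
of `V(A) ∩ V(B)`. -/
def sepMinusEdges {V : Type*} {H : SimpleGraph V} (A B : H.Subgraph) : Set (Sym2 V) :=
  {e | e ∈ A.edgeSet ∧ ¬ ∀ v ∈ e, v ∈ A.verts ∩ B.verts}

/-- Separations `(A,B)` and `(C,D)` are independent. -/
def IndepSeps {V : Type*} {H : SimpleGraph V} (A B C D : H.Subgraph) : Prop :=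
  sepMinusEdges A B ∩ sepMinusEdges C D = ∅ ∧
    (A.verts \ B.verts) ∩ (C.verts \ D.verts) = ∅

/-- `β(T)`: the maximum size of a stable set in the subgraph of `T` induced by the
vertices of degree at most 2. -/
noncomputable def beta {V : Type*} (T : SimpleGraph V) : ℕ :=
  sSup {n | ∃ S : Set V, S.ncard = n ∧ (∀ v ∈ S, (T.neighborSet v).ncard ≤ 2) ∧
    (∀ u ∈ S, ∀ w ∈ S, ¬ T.Adj u w)}

theorem parent_unique {V : Type*} {T : SimpleGraph V} (hT : T.IsTree) (r v w₁ w₂ : V)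
    (h1 : T.Adj w₁ v) (h2 : T.Adj w₂ v) (d1 : T.dist r v = T.dist r w₁ + 1)
    (d2 : T.dist r v = T.dist r w₂ + 1) : w₁ = w₂ := by
  obtain ⟨p, hp⟩ := hT.connected.exists_walk_length_eq_dist r w₁
  obtain ⟨q, hq⟩ := hT.connected.exists_walk_length_eq_dist r w₂
  have hp' : (p.concat h1).IsPath := Walk.isPath_of_length_eq_dist _ (by simp [hp, d1])
  have hq' : (q.concat h2).IsPath := Walk.isPath_of_length_eq_dist _ (by simp [hq, d2])
  have := hT.isAcyclic.path_unique ⟨_, hp'⟩ ⟨_, hq'⟩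
  have h := congrArg (fun p : T.Path r v => p.1.penultimate) this
  simpa using h

open Classical in
theorem exists_low_degree {V : Type*} [Fintype V] {T : SimpleGraph V} (hT : T.IsTree)
    (X N : Finset V) (hX : X.Nonempty) (hN : N.card ≤ 2)
    (hXN : ∀ x ∈ X, ∀ y, T.Adj x y → y ∈ X ∪ N) : ∃ x ∈ X, T.degree x ≤ 2 := by
  by_contra! hcon
  obtain ⟨r, hr⟩ := hX
  let C : V → Finset V := fun v => Finset.univ.filter fun w => T.Adj v w ∧ T.dist r w = T.dist r v + 1
  let P : V → Finset V := fun v => Finset.univ.filter fun w => T.Adj v w ∧ T.dist r v = T.dist r w + 1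
  have hdeg : ∀ v, T.degree v ≤ (C v).card + (P v).card := by
    intro v
    rw [← T.card_neighborFinset_eq_degree]
    refine (Finset.card_le_card ?_).trans (Finset.card_union_le _ _)
    intro w hw
    have hw : T.Adj v w := by simpa using hw
    have := hT.dist_eq_dist_add_one_of_adj r hw
    simp only [C, P, Finset.mem_union, Finset.mem_filter, Finset.mem_univ, true_and, hw]
    tauto
  have hP : ∀ v, (P v).card ≤ 1 := by
    intro v
    rw [Finset.card_le_one]
    intro a ha b hb
    simp only [P, Finset.mem_filter, Finset.mem_univ, true_and] at ha hb
    exact parent_unique hT r v a b ha.1.symm hb.1.symm ha.2 hb.2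
  have hPr : (P r).card = 0 := by
    rw [Finset.card_eq_zero]
    ext w
    simp [P]
  have hdisj : (X : Set V).PairwiseDisjoint C := by
    intro a _ b _ hab
    refine Finset.disjoint_left.2 fun w ha hb => hab ?_
    simp only [C, Finset.mem_filter, Finset.mem_univ, true_and] at ha hb
    exact parent_unique hT r w a b ha.1 hb.1 ha.2 hb.2
  have hsub : X.biUnion C ⊆ (X.erase r) ∪ N.erase r := by
    intro w hw
    simp only [C, Finset.mem_biUnion, Finset.mem_filter, Finset.mem_univ, true_and] at hw
    obtain ⟨v, hv, hvw, hd⟩ := hw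
    have hne : w ≠ r := by
      rintro rfl
      simp at hd
    have := hXN v hv w hvw
    simp only [Finset.mem_union, Finset.mem_erase] at this ⊢
    tauto
  have h1 := Finset.card_le_card hsub
  rw [Finset.card_biUnion hdisj] at h1
  have h2 := Finset.card_union_le (X.erase r) (N.erase r)
  have h3 := Finset.card_erase_le (s := N) (a := r)
  have h4 : (X.erase r).card + 1 = X.card := Finset.card_erase_add_one hr
  have h5 : ∑ v ∈ X.erase r, 2 ≤ ∑ v ∈ X.erase r, (C v).card := by
    refine Finset.sum_le_sum fun v hv => ?_
    have := hcon v (Finset.mem_of_mem_erase hv)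
    have := hdeg v
    have := hP v
    omega
  have h6 := Finset.add_sum_erase X (fun v => (C v).card) hr
  have h7 := hcon r hr
  have h8 := hdeg r
  simp only [Finset.sum_const, smul_eq_mul] at h5
  omega

/-- The star at `v`. -/
def starSub {V : Type*} (T : SimpleGraph V) (v : V) : T.Subgraph where
  verts := insert v (T.neighborSet v)
  Adj a b := T.Adj a b ∧ (a = v ∨ b = v)
  adj_sub h := h.1
  edge_vert := by
    rintro a b ⟨h, rfl | rfl⟩
    · simp
    · simp [h.symm]
  symm := ⟨fun a b h => ⟨h.1.symm, h.2.symm⟩⟩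

/-- The complement of a vertex. -/
def coSub {V : Type*} (T : SimpleGraph V) (v : V) : T.Subgraph where
  verts := {v}ᶜ
  Adj a b := T.Adj a b ∧ a ≠ v ∧ b ≠ v
  adj_sub h := h.1
  edge_vert := by
    rintro a b ⟨h, h1, h2⟩
    simpa using h1
  symm := ⟨fun a b h => ⟨h.1.symm, h.2.2, h.2.1⟩⟩

theorem star_inter {V : Type*} (T : SimpleGraph V) (v : V) :
    (starSub T v).verts ∩ (coSub T v).verts = T.neighborSet v := by
  ext w
  simp only [starSub, coSub, Set.mem_inter_iff, Set.mem_insert_iff, mem_neighborSet,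
    Set.mem_compl_iff, Set.mem_singleton_iff]
  constructor
  · tauto
  · intro h
    exact ⟨Or.inr h, h.ne'⟩

theorem star_diff {V : Type*} (T : SimpleGraph V) (v : V) :
    (starSub T v).verts \ (coSub T v).verts = {v} := by
  ext w
  simp only [starSub, coSub, Set.mem_diff, Set.mem_insert_iff, mem_neighborSet,
    Set.mem_compl_iff, Set.mem_singleton_iff]
  tauto

theorem star_sep {V : Type*} (T : SimpleGraph V) (v : V) (hd : (T.neighborSet v).ncard ≤ 2)
    (hne : ∃ w, w ≠ v ∧ ¬ T.Adj v w) : IsSepLE2 T (starSub T v) (coSub T v) := by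
  refine ⟨_, hd, ?_, ?_, ?_, ?_, ?_⟩
  · rw [Set.disjoint_left]
    intro e
    induction e with
    | _ a b =>
      simp only [Subgraph.mem_edgeSet, starSub, coSub]
      tauto
  · ext a b
    · simp only [starSub, coSub, Subgraph.verts_sup, Set.mem_union, Set.mem_insert_iff,
        mem_neighborSet, Set.mem_compl_iff, Set.mem_singleton_iff, Subgraph.verts_top,
        Set.mem_univ]
      tauto
    · simp only [starSub, coSub, Subgraph.sup_adj, Subgraph.top_adj]
      tauto
  · rw [star_diff]
    simp
  · obtain ⟨w, h1, h2⟩ := hne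
    refine ⟨w, ?_⟩
    simp [starSub, coSub, h1, h2]
  · rw [star_inter]

theorem star_indep {V : Type*} (T : SimpleGraph V) (v w : V) (h : v ≠ w) (hn : ¬ T.Adj v w) :
    IndepSeps (starSub T v) (coSub T v) (starSub T w) (coSub T w) := by
  constructor
  · rw [Set.eq_empty_iff_forall_notMem]
    intro e
    induction e with
    | _ a b =>
      simp only [sepMinusEdges, Set.mem_inter_iff, Set.mem_setOf_eq, Subgraph.mem_edgeSet]
      rintro ⟨⟨⟨h1, h2⟩, -⟩, ⟨⟨-, h3⟩, -⟩⟩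
      have := h1.symm
      rcases h2 with rfl | rfl <;> rcases h3 with rfl | rfl <;> simp_all
  · rw [star_diff, star_diff]
    simpa using h.symm

theorem adj_of_mem_diff {V : Type*} {T : SimpleGraph V} {A B : T.Subgraph} (h : A ⊔ B = ⊤)
    {x y : V} (hx : x ∈ A.verts \ B.verts) (hxy : T.Adj x y) : A.Adj x y := by
  have : (A ⊔ B).Adj x y := by rw [h]; exact hxy
  rcases this with h | h
  · exact h
  · exact absurd h.fst_mem hx.2

theorem forward {V : Type*} [Fintype V] (T : SimpleGraph V) (hT : T.IsTree) (n : ℕ)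
    (F : Fin n → T.Subgraph × T.Subgraph)
    (hF : ∀ i, IsSepLE2 T (F i).1 (F i).2)
    (hI : ∀ i j, i ≠ j → IndepSeps (F i).1 (F i).2 (F j).1 (F j).2) :
    ∃ S : Set V, S.ncard = n ∧ (∀ v ∈ S, (T.neighborSet v).ncard ≤ 2) ∧
      (∀ u ∈ S, ∀ w ∈ S, ¬ T.Adj u w) := by
  classical
  have key : ∀ i, ∃ x ∈ (F i).1.verts \ (F i).2.verts, (T.neighborSet x).ncard ≤ 2 := by
    intro i
    obtain ⟨k, hk, -, hu, hne, -, hc⟩ := hF i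
    obtain ⟨x, hx, hd⟩ := exists_low_degree hT ((F i).1.verts \ (F i).2.verts).toFinset
      ((F i).1.verts ∩ (F i).2.verts).toFinset (Set.toFinset_nonempty.2 hne)
      (by rw [← Set.ncard_eq_toFinset_card']; omega)
      (by
        intro x hx y hxy
        rw [Set.mem_toFinset] at hx
        have := (adj_of_mem_diff hu hx hxy).snd_mem
        by_cases hy : y ∈ (F i).2.verts <;> simp [this, hy])
    refine ⟨x, by simpa using hx, ?_⟩
    rw [Set.ncard_eq_toFinset_card']
    convert hd using 1
    rw [← T.card_neighborFinset_eq_degree]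
    congr 1
  choose f hf hd using key
  have hinj : Function.Injective f := by
    intro i j hij
    by_contra h
    have := (hI i j h).2
    exact (Set.eq_empty_iff_forall_notMem.1 this) (f i) ⟨hf i, hij ▸ hf j⟩
  refine ⟨Set.range f, ?_, ?_, ?_⟩
  · rw [← Set.image_univ, Set.ncard_image_of_injective _ hinj]
    simp
  · rintro _ ⟨i, rfl⟩
    exact hd i
  · rintro _ ⟨i, rfl⟩ _ ⟨j, rfl⟩ hadj
    have hij : i ≠ j := by
      rintro rfl
      exact hadj.ne rfl
    obtain ⟨ki, -, -, hui, -⟩ := hF i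
    obtain ⟨kj, -, -, huj, -⟩ := hF j
    have h1 := adj_of_mem_diff hui (hf i) hadj
    have h2 := adj_of_mem_diff huj (hf j) hadj.symm
    refine (Set.eq_empty_iff_forall_notMem.1 (hI i j hij).1) s(f i, f j) ⟨⟨h1, ?_⟩, ⟨h2.symm, ?_⟩⟩
    · intro h
      exact (hf i).2 (h (f i) (by simp)).2
    · intro h
      exact (hf j).2 (h (f j) (by simp)).2

theorem exists_far {V : Type*} [Fintype V] (T : SimpleGraph V) (v : V)
    (h : (T.neighborSet v).ncard + 1 < Fintype.card V) : ∃ w, w ≠ v ∧ ¬ T.Adj v w := by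
  by_contra! hc
  have : (insert v (T.neighborSet v)) = Set.univ := by
    ext w
    by_cases hw : w = v <;> simp [hw]
    exact hc w hw
  have h1 := Set.ncard_insert_le v (T.neighborSet v)
  rw [this, Set.ncard_univ, Nat.card_eq_fintype_card] at h1
  omega

theorem backward {V : Type*} [Fintype V] (T : SimpleGraph V) (hT : T.IsTree)
    (hV : 3 ≤ Fintype.card V) (S : Set V) (hd : ∀ v ∈ S, (T.neighborSet v).ncard ≤ 2)
    (hS : ∀ u ∈ S, ∀ w ∈ S, ¬ T.Adj u w) :
    ∃ F : Fin S.ncard → T.Subgraph × T.Subgraph,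
        (∀ i, IsSepLE2 T (F i).1 (F i).2) ∧
        (∀ i j, i ≠ j → IndepSeps (F i).1 (F i).2 (F j).1 (F j).2) := by
  classical
  by_cases hall : ∀ v ∈ S, ∃ w, w ≠ v ∧ ¬ T.Adj v w
  · have e : Fin S.ncard ≃ S := (Finite.equivFinOfCardEq rfl).symm
    refine ⟨fun i => (starSub T (e i), coSub T (e i)), fun i => ?_, fun i j hij => ?_⟩
    · exact star_sep T _ (hd _ (e i).2) (hall _ (e i).2)
    · refine star_indep T _ _ ?_ (hS _ (e i).2 _ (e j).2)
      intro h
      exact hij (e.injective (Subtype.ext h))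
  · push Not at hall
    obtain ⟨v, hv, hadj⟩ := hall
    have hSv : S = {v} := by
      ext w
      constructor
      · intro hw
        by_contra h
        exact hS v hv w hw (hadj w h)
      · rintro rfl
        exact hv
    have : Nontrivial V := Fintype.one_lt_card_iff_nontrivial.1 (by omega)
    obtain ⟨u, hu⟩ := hT.exists_vert_degree_one_of_nontrivial
    have hu1 : (T.neighborSet u).ncard = 1 := by
      rw [Set.ncard_eq_toFinset_card', ← hu]
      rfl
    have h1 : S.ncard = 1 := by rw [hSv]; simp
    rw [h1]
    refine ⟨fun _ => (starSub T u, coSub T u), fun i => ?_, fun i j hij => ?_⟩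
    · exact star_sep T u (by omega) (exists_far T u (by omega))
    · exact absurd (Subsingleton.elim i j) hij

/-- For every tree `T` with at least 3 vertices, the maximum number of pairwise independent
`(≤2)`-separations of `T` equals `β(T)`. -/
theorem stmt0 {V : Type*} [Fintype V] (T : SimpleGraph V) (hT : T.IsTree)
    (hV : 3 ≤ Fintype.card V) :
    sSup {n | ∃ F : Fin n → T.Subgraph × T.Subgraph,
        (∀ i, IsSepLE2 T (F i).1 (F i).2) ∧
        (∀ i j, i ≠ j → IndepSeps (F i).1 (F i).2 (F j).1 (F j).2)} = beta T := by
  unfold beta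
  congr 1
  ext n
  constructor
  · rintro ⟨F, hF, hI⟩
    exact forward T hT n F hF hI
  · rintro ⟨S, rfl, hd, hS⟩
    exact backward T hT hV S hd hS
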